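/- arXiv:1811.02072 — 4 statements merged into one kernel-verified Lean document; each statement's English description precedes it below -/
import Mathlib

section
/- A standard graded Artinian K-algebra A has the Weak Lefschetz Property if and only if the number of parts of its Jordan type J_A equals the Sperner number of A. -/
open Module LinearMap

namespace Paper

variable {K : Type*} [Field K]

/-- The number of Jordan blocks of size `j` of an endomorphism `φ`, expressed through
the ranks of its powers: `#{blocks of size j} = rk φ^{j-1} − 2 rk φ^j + rk φ^{j+1}`
(for `j ≥ 1`). -/
noncomputable def blockCount {V : Type*} [AddCommGroup V] [Module K V]
    (φ : Module.End K V) (j : ℕ) : ℕ :=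
  (finrank K ↥(LinearMap.range (φ ^ (j - 1))) + finrank K ↥(LinearMap.range (φ ^ (j + 1)))) -
    2 * finrank K ↥(LinearMap.range (φ ^ j))

/-- The Jordan type of an endomorphism `φ` of a finite-dimensional space: the partition
(multiset) formed by the sizes of the Jordan blocks of `φ`. -/
noncomputable def jordanType {V : Type*} [AddCommGroup V] [Module K V]
    (φ : Module.End K V) : Multiset ℕ :=
  ∑ j ∈ Finset.Icc 1 (finrank K V), Multiset.replicate (blockCount φ j) j

/-- A property `P` holds for a generic element of a finite-dimensional subspace `W` if,
in coordinates with respect to a fixed basis of `W`, it holds on the nonvanishing locus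
of some nonzero polynomial (a nonempty Zariski-open subset of `W`). -/
def GenericallyOn {A : Type*} [AddCommGroup A] [Module K A]
    (W : Submodule K A) [Module.Finite K ↥W] (P : A → Prop) : Prop :=
  ∃ g : MvPolynomial (Fin (finrank K ↥W)) K, g ≠ 0 ∧
    ∀ c : Fin (finrank K ↥W) → K, MvPolynomial.eval c g ≠ 0 →
      P (∑ i, c i • ((Module.finBasis K ↥W) i : A))

/-- The conjugate (dual) partition of the partition formed by the values `h 0, …, h d`
of a Hilbert function: its `m`-th part is `#{i ≤ d : h i ≥ m}`. -/
noncomputable def conjHilb (h : ℕ → ℕ) (d : ℕ) : Multiset ℕ :=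
  (Finset.Icc 1 ((Finset.range (d + 1)).sup h)).val.map
    fun m => ((Finset.range (d + 1)).filter fun i => m ≤ h i).card

/-- The sum of the `m` largest parts of a partition (multiset of naturals). -/
noncomputable def topSum (P : Multiset ℕ) (m : ℕ) : ℕ :=
  (((P.sort (· ≤ ·)).reverse).take m).sum

end Paper

namespace Paper

/-- Rank convexity. -/
lemma aux_convex {K V : Type*} [Field K] [AddCommGroup V] [Module K V] [FiniteDimensional K V]
    (φ : Module.End K V) (j : ℕ) :
    2 * finrank K ↥(LinearMap.range (φ ^ (j + 1))) ≤
      finrank K ↥(LinearMap.range (φ ^ j)) + finrank K ↥(LinearMap.range (φ ^ (j + 2))) := by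
  have key : ∀ m : ℕ, finrank K ↥(LinearMap.range (φ ^ (m + 1))) +
      finrank K ↥(LinearMap.ker (φ.domRestrict (LinearMap.range (φ ^ m)))) =
      finrank K ↥(LinearMap.range (φ ^ m)) := by
    intro m
    have h := LinearMap.finrank_range_add_finrank_ker (φ.domRestrict (LinearMap.range (φ ^ m)))
    rw [LinearMap.range_domRestrict, ← LinearMap.range_comp] at h
    rw [pow_succ']
    exact h
  have hle : LinearMap.range (φ ^ (j + 1)) ≤ LinearMap.range (φ ^ j) := by
    rw [pow_succ]
    exact LinearMap.range_comp_le_range _ _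
  have hk : finrank K ↥(LinearMap.ker (φ.domRestrict (LinearMap.range (φ ^ (j + 1))))) ≤
      finrank K ↥(LinearMap.ker (φ.domRestrict (LinearMap.range (φ ^ j)))) := by
    let f : ↥(LinearMap.ker (φ.domRestrict (LinearMap.range (φ ^ (j + 1))))) →ₗ[K]
      ↥(LinearMap.ker (φ.domRestrict (LinearMap.range (φ ^ j)))) :=
      LinearMap.restrict (Submodule.inclusion hle) (by
        intro x hx
        simpa using hx)
    apply LinearMap.finrank_le_finrank_of_injective (f := f)
    intro x y hxy
    have h1 : Submodule.inclusion hle x.1 = Submodule.inclusion hle y.1 := congrArg Subtype.val hxy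
    exact Subtype.ext (Submodule.inclusion_injective hle h1)
  have h1 := key j
  have h2 := key (j + 1)
  have e : j + 1 + 1 = j + 2 := rfl
  rw [e] at h2
  omega

lemma aux_card {K V : Type*} [Field K] [AddCommGroup V] [Module K V] [FiniteDimensional K V]
    (φ : Module.End K V) (hφ : IsNilpotent φ) :
    Multiset.card (jordanType φ) + finrank K ↥(LinearMap.range φ) = finrank K V := by
  have h1 : ∀ n : ℕ, (∑ j ∈ Finset.Icc 1 n, blockCount φ j) + finrank K ↥(LinearMap.range φ) +
      finrank K ↥(LinearMap.range (φ ^ n)) = finrank K V +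
        finrank K ↥(LinearMap.range (φ ^ (n + 1))) := by
    intro n
    induction n with
    | zero =>
      have e : finrank K ↥(LinearMap.range (φ ^ 0)) = finrank K V := by
        rw [pow_zero, Module.End.one_eq_id, LinearMap.range_id, finrank_top]
      rw [e, zero_add, pow_one]
      simp
      omega
    | succ n ih =>
      rw [Finset.sum_Icc_succ_top (by omega)]
      have hc := aux_convex φ n
      have hb : blockCount φ (n + 1) = (finrank K ↥(LinearMap.range (φ ^ n)) +
          finrank K ↥(LinearMap.range (φ ^ (n + 2)))) -
          2 * finrank K ↥(LinearMap.range (φ ^ (n + 1))) := rfl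
      have e : n + 1 + 1 = n + 2 := rfl
      rw [hb, e]
      omega
  have h2 := h1 (finrank K V)
  have hz : φ ^ (finrank K V) = 0 := by
    obtain ⟨m, hm⟩ := hφ
    rw [← LinearMap.ker_eq_top, eq_top_iff, ← LinearMap.ker_eq_top.mpr hm]
    exact Module.End.ker_pow_le_ker_pow_finrank φ m
  rw [pow_succ, hz, zero_mul, LinearMap.range_zero, finrank_bot, add_zero, add_zero] at h2
  simpa [jordanType, Multiset.card_sum] using h2

lemma aux_indep {K V : Type*} [Field K] [AddCommGroup V] [Module K V] [FiniteDimensional K V]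
    (N : ℕ → Submodule K V) (hN : iSupIndep N) (n : ℕ) :
    finrank K ↥((Finset.range n).sup N) = ∑ i ∈ Finset.range n, finrank K ↥(N i) := by
  induction n with
  | zero => rw [Finset.range_zero, Finset.sup_empty, finrank_bot, Finset.sum_empty]
  | succ n ih =>
    have hd : Disjoint (N n) ((Finset.range n).sup N) :=
      (hN.supIndep' (Finset.range (n + 1))) (by simp) (by simp) (by simp)
    have h := Submodule.finrank_sup_add_finrank_inf_eq (N n) ((Finset.range n).sup N)
    rw [hd.eq_bot, finrank_bot] at h
    rw [Finset.sum_range_succ, Finset.range_add_one, Finset.sup_insert]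
    omega

lemma aux_sup {K V : Type*} [Field K] [AddCommGroup V] [Module K V]
    (N : ℕ → Submodule K V) (d : ℕ) (h : ∀ i, d < i → N i = ⊥) :
    (Finset.range (d + 1)).sup N = ⨆ i, N i := by
  apply le_antisymm
  · exact Finset.sup_le fun i _ => le_iSup N i
  · refine iSup_le fun i => ?_
    by_cases hi : d < i
    · simp [h i hi]
    · exact Finset.le_sup (f := N) (by simp; omega)

lemma aux_arith (h : ℕ → ℕ) (k d : ℕ) (hk : k ≤ d) :
    (∑ i ∈ Finset.range (d + 1), (if i < k then h i else h (i + 1))) + h k =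
      (∑ i ∈ Finset.range (d + 1), h i) + h (d + 1) := by
  have h1 : ∀ n ≤ k, (∑ i ∈ Finset.range n, (if i < k then h i else h (i + 1))) =
      ∑ i ∈ Finset.range n, h i := by
    intro n hn
    refine Finset.sum_congr rfl fun i hi => ?_
    rw [Finset.mem_range] at hi
    rw [if_pos (by omega)]
  induction d, hk using Nat.le_induction with
  | base =>
    rw [Finset.sum_range_succ, h1 k le_rfl, Finset.sum_range_succ]
    simp
    ring
  | succ n hn ih =>
    rw [Finset.sum_range_succ, Finset.sum_range_succ _ (n + 1), if_neg (by omega)]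
    omega

section
variable {K A : Type*} [Field K] [CommRing A] [Algebra K A]
    [FiniteDimensional K A] (𝒜 : ℕ → Submodule K A) [GradedAlgebra 𝒜] 

lemma aux_total (d : ℕ) (htop : ∀ i : ℕ, d < i → 𝒜 i = ⊥)
    : finrank K A = ∑ i ∈ Finset.range (d + 1), finrank K ↥(𝒜 i) := by
  have hI := DirectSum.Decomposition.isInternal 𝒜
  rw [← aux_indep 𝒜 hI.submodule_iSupIndep, aux_sup 𝒜 d htop, hI.submodule_iSup_eq_top,
    finrank_top]

lemma aux_map_le (l : A) (hl : l ∈ 𝒜 1) (i : ℕ) :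
    (𝒜 i).map (LinearMap.mulLeft K l) ≤ 𝒜 (i + 1) := by
  rintro _ ⟨x, hx, rfl⟩
  have := SetLike.mul_mem_graded hl hx
  rwa [add_comm] at this

lemma aux_range (d : ℕ) (htop : ∀ i : ℕ, d < i → 𝒜 i = ⊥)
    (l : A) (hl : l ∈ 𝒜 1) : finrank K ↥(LinearMap.range (LinearMap.mulLeft K l)) =
    ∑ i ∈ Finset.range (d + 1), finrank K ↥((𝒜 i).map (LinearMap.mulLeft K l)) := by
  have hI := DirectSum.Decomposition.isInternal 𝒜
  have hind : iSupIndep fun i => (𝒜 i).map (LinearMap.mulLeft K l) :=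
    (hI.submodule_iSupIndep.comp (f := fun i : ℕ => i + 1) (add_left_injective 1)).mono
      (fun i => aux_map_le 𝒜 l hl i)
  rw [← aux_indep _ hind, aux_sup _ d (fun i hi => by rw [htop i hi, Submodule.map_bot]),
    ← Submodule.map_iSup, hI.submodule_iSup_eq_top, LinearMap.range_eq_map]

lemma aux_nilp (d : ℕ) (htop : ∀ i : ℕ, d < i → 𝒜 i = ⊥)
    (l : A) (hl : l ∈ 𝒜 1) : IsNilpotent (LinearMap.mulLeft K l) := by
  refine ⟨d + 1, ?_⟩
  have h := SetLike.pow_mem_graded (d + 1) hl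
  rw [htop _ (by simp), Submodule.mem_bot] at h
  rw [LinearMap.pow_mulLeft, h, LinearMap.mulLeft_zero_eq_zero]

/-- numeric summary -/
lemma aux_main (d : ℕ) (htop : ∀ i : ℕ, d < i → 𝒜 i = ⊥)
    (l : A) (hl : l ∈ 𝒜 1) (k : ℕ) (hk : k ≤ d) :
    finrank K ↥(LinearMap.range (LinearMap.mulLeft K l)) + finrank K ↥(𝒜 k) ≤ finrank K A ∧
    (finrank K ↥(LinearMap.range (LinearMap.mulLeft K l)) + finrank K ↥(𝒜 k) = finrank K A ↔
      ∀ i ∈ Finset.range (d + 1), finrank K ↥((𝒜 i).map (LinearMap.mulLeft K l)) =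
        if i < k then finrank K ↥(𝒜 i) else finrank K ↥(𝒜 (i + 1))) := by
  have hle : ∀ i ∈ Finset.range (d + 1), finrank K ↥((𝒜 i).map (LinearMap.mulLeft K l)) ≤
        if i < k then finrank K ↥(𝒜 i) else finrank K ↥(𝒜 (i + 1)) := by
    intro i _
    split_ifs
    · exact Submodule.finrank_map_le _ _
    · exact Submodule.finrank_mono (aux_map_le 𝒜 l hl i)
  have h1 := aux_arith (fun i => finrank K ↥(𝒜 i)) k d hk
  have h2 := aux_total 𝒜 d htop
  have h3 := aux_range 𝒜 d htop l hl
  have h4 : finrank K ↥(𝒜 (d + 1)) = 0 := by rw [htop _ (by omega), finrank_bot]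
  have h5 := Finset.sum_le_sum hle
  refine ⟨by omega, ?_⟩
  rw [← Finset.sum_eq_sum_iff_of_le hle]
  omega

end

/-- Lower semicontinuity of rank in a linear family. -/
lemma aux_generic {K V : Type*} [Field K] [AddCommGroup V] [Module K V] [FiniteDimensional K V]
    {n : ℕ} (F : Fin n → Module.End K V) (c₀ : Fin n → K) :
    ∃ g : MvPolynomial (Fin n) K, g ≠ 0 ∧ ∀ c : Fin n → K, MvPolynomial.eval c g ≠ 0 →
      finrank K ↥(LinearMap.range (∑ i, c₀ i • F i)) ≤
        finrank K ↥(LinearMap.range (∑ i, c i • F i)) := by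
  set φ := ∑ i, c₀ i • F i with hφ
  set R := LinearMap.range φ with hR
  obtain ⟨p, hp⟩ := R.subtype.exists_leftInverse_of_injective (Submodule.ker_subtype R)
  obtain ⟨s, hs⟩ := φ.rangeRestrict.exists_rightInverse_of_surjective φ.range_rangeRestrict
  let b := Module.finBasis K R
  let M : (Module.End K V) →ₗ[K] Matrix (Fin (finrank K R)) (Fin (finrank K R)) K :=
    { toFun := fun ψ => LinearMap.toMatrix b b (p ∘ₗ ψ ∘ₗ s)
      map_add' := fun x y => by
        rw [← map_add]; congr 1; ext; simp
      map_smul' := fun x y => by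
        rw [← map_smul]; congr 1; ext; simp }
  have hM : M φ = 1 := by
    have : p ∘ₗ φ ∘ₗ s = LinearMap.id := by
      ext x
      have h1 := LinearMap.congr_fun hs x
      have h2 := LinearMap.congr_fun hp x
      have h3 : φ (s x) = x := congrArg Subtype.val h1
      simp only [LinearMap.comp_apply, h3]
      exact congrArg Subtype.val h2
    change LinearMap.toMatrix b b (p ∘ₗ φ ∘ₗ s) = 1
    rw [this, LinearMap.toMatrix_id]
  let G : Matrix (Fin (finrank K R)) (Fin (finrank K R)) (MvPolynomial (Fin n) K) :=
    ∑ i, (MvPolynomial.X i : MvPolynomial (Fin n) K) • (M (F i)).map MvPolynomial.C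
  have hG : ∀ c : Fin n → K, MvPolynomial.eval c G.det = (M (∑ i, c i • F i)).det := by
    intro c
    rw [RingHom.map_det]
    congr 1
    ext a e
    simp [G, Matrix.sum_apply]
  refine ⟨G.det, ?_, ?_⟩
  · intro h0
    have := hG c₀
    rw [h0, ← hφ, hM] at this
    simp at this
  · intro c hc
    rw [hG] at hc
    set ψ := ∑ i, c i • F i
    have hu : IsUnit (LinearMap.toMatrix b b (p ∘ₗ ψ ∘ₗ s)).det := isUnit_iff_ne_zero.mpr hc
    have hr : LinearMap.range (p ∘ₗ ψ ∘ₗ s) = ⊤ := LinearMap.range_eq_top.mpr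
      (LinearEquiv.surjective (LinearEquiv.ofIsUnitDet (f := p ∘ₗ ψ ∘ₗ s) (v := b) (v' := b)
        (isUnit_iff_ne_zero.mpr hc)))
    calc finrank K R = finrank K ↥(LinearMap.range (p ∘ₗ ψ ∘ₗ s)) := by rw [hr, finrank_top]
      _ ≤ finrank K ↥((LinearMap.range ψ).map p) := by
        apply Submodule.finrank_mono
        rintro _ ⟨x, rfl⟩
        exact ⟨ψ (s x), ⟨s x, rfl⟩, rfl⟩
      _ ≤ _ := Submodule.finrank_map_le _ _

end Paper

open Paper Module LinearMap in
/-- a standard graded Artinian `K`-algebra `A` has the Weak Lefschetz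
Property iff the number of parts of its (generic) Jordan type equals the Sperner
number of `A` (the maximal entry of the Hilbert vector). -/
theorem hasWLP_iff_jordanType_card_eq_sperner
    {K A : Type*} [Field K] [CharZero K] [CommRing A] [Algebra K A]
    [FiniteDimensional K A] (𝒜 : ℕ → Submodule K A) [GradedAlgebra 𝒜] (d : ℕ)
    (hstd : ∀ i : ℕ, 𝒜 (i + 1) = 𝒜 1 * 𝒜 i)
    (h0 : 𝒜 0 = Submodule.span K {(1 : A)})
    (htop : ∀ i : ℕ, d < i → 𝒜 i = ⊥)
    (hd : 𝒜 d ≠ ⊥) :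
    (∃ l ∈ 𝒜 1, ∀ i : ℕ,
        finrank K ↥((𝒜 i).map (LinearMap.mulLeft K l)) =
          min (finrank K ↥(𝒜 i)) (finrank K ↥(𝒜 (i + 1)))) ↔
      GenericallyOn (𝒜 1) fun l =>
        Multiset.card (jordanType (LinearMap.mulLeft K l)) =
          (Finset.range (d + 1)).sup fun i => finrank K ↥(𝒜 i) := by
  obtain ⟨k, hk, hkm⟩ := Finset.exists_mem_eq_sup (Finset.range (d + 1)) (by simp)
    (fun i => finrank K ↥(𝒜 i))
  have hmax : ∀ i, finrank K ↥(𝒜 i) ≤ finrank K ↥(𝒜 k) := by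
    intro i
    by_cases hi : d < i
    · rw [htop i hi, finrank_bot]; exact Nat.zero_le _
    · rw [← hkm]
      exact Finset.le_sup (f := fun i => finrank K ↥(𝒜 i)) (by simp; omega)
  rw [hkm]
  have hkd : k ≤ d := by simpa [Nat.lt_succ_iff] using hk
  have hmem : ∀ c : Fin (finrank K ↥(𝒜 1)) → K,
      ∑ i, c i • ((Module.finBasis K ↥(𝒜 1)) i : A) ∈ 𝒜 1 := fun c =>
    Submodule.sum_mem _ fun i _ => Submodule.smul_mem _ _ (Subtype.property _)
  constructor
  · rintro ⟨l, hl, hr⟩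
    have hstep : ∀ i, finrank K ↥(𝒜 (i + 1)) ≤ finrank K ↥(𝒜 i) →
        ∀ j, i ≤ j → (𝒜 j).map (LinearMap.mulLeft K l) = 𝒜 (j + 1) := by
      intro i hi j hij
      induction j, hij using Nat.le_induction with
      | base =>
        apply Submodule.eq_of_le_of_finrank_eq (aux_map_le 𝒜 l hl i)
        rw [hr i, min_eq_right hi]
      | succ j _ ih =>
        apply le_antisymm (aux_map_le 𝒜 l hl _)
        rw [hstd (j + 1), Submodule.mul_le]
        intro a ha y hy
        rw [← ih] at hy
        obtain ⟨z, hz, rfl⟩ := hy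
        refine ⟨a * z, ?_, ?_⟩
        · rw [hstd j]; exact Submodule.mul_mem_mul ha hz
        · simp only [LinearMap.mulLeft_apply]; ring
    have hmono : ∀ i, finrank K ↥(𝒜 (i + 1)) ≤ finrank K ↥(𝒜 i) →
        ∀ j, i ≤ j → finrank K ↥(𝒜 (j + 1)) ≤ finrank K ↥(𝒜 j) := by
      intro i hi j hij
      rw [← hstep i hi j hij]
      exact Submodule.finrank_map_le _ _
    have hrank := (aux_main 𝒜 d htop l hl k hkd).2.2 (by
      intro i _
      rw [hr i]
      split_ifs with hik
      · apply min_eq_left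
        by_contra hcon
        push Not at hcon
        have hdec : ∀ j, i + 1 ≤ j → finrank K ↥(𝒜 j) ≤ finrank K ↥(𝒜 (i + 1)) := by
          intro j hj
          induction j, hj using Nat.le_induction with
          | base => exact le_rfl
          | succ j hj ih => exact (hmono i hcon.le j (by omega)).trans ih
        have h1 := hdec k hik
        have h2 := hmax i
        omega
      · exact min_eq_right (hmono k (hmax _) i (by omega)))
    have hsum : ∀ c : Fin (finrank K ↥(𝒜 1)) → K,
        ∑ i, c i • LinearMap.mulLeft K ((Module.finBasis K ↥(𝒜 1)) i : A) =
        LinearMap.mulLeft K (∑ i, c i • ((Module.finBasis K ↥(𝒜 1)) i : A)) := by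
      intro c
      ext x
      simp [LinearMap.sum_apply, Finset.sum_mul]
    obtain ⟨g, hg0, hg⟩ := aux_generic
      (fun i => LinearMap.mulLeft K ((Module.finBasis K ↥(𝒜 1)) i : A))
      (fun i => (Module.finBasis K ↥(𝒜 1)).repr ⟨l, hl⟩ i)
    refine ⟨g, hg0, fun c hc => ?_⟩
    have h1 := hg c hc
    rw [hsum, hsum] at h1
    have hl' : ∑ i, (Module.finBasis K ↥(𝒜 1)).repr ⟨l, hl⟩ i •
        ((Module.finBasis K ↥(𝒜 1)) i : A) = l := by
      have := congrArg (𝒜 1).subtype ((Module.finBasis K ↥(𝒜 1)).sum_repr ⟨l, hl⟩)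
      rw [map_sum] at this
      exact this
    rw [hl'] at h1
    have h2 := (aux_main 𝒜 d htop _ (hmem c) k hkd).1
    have h3 := aux_card _ (aux_nilp 𝒜 d htop _ (hmem c))
    omega
  · rintro ⟨g, hg0, hg⟩
    obtain ⟨c, hc⟩ : ∃ c, MvPolynomial.eval c g ≠ 0 := by
      by_contra hcon
      push Not at hcon
      exact hg0 (MvPolynomial.funext fun c => by simpa using hcon c)
    have h1 := hg c hc
    refine ⟨_, hmem c, fun i => ?_⟩
    have h3 := aux_card _ (aux_nilp 𝒜 d htop _ (hmem c))
    by_cases hi : d < i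
    · rw [htop i hi, Submodule.map_bot, finrank_bot, Nat.zero_min]
    · have h4 := (aux_main 𝒜 d htop _ (hmem c) k hkd).2.1 (by omega) i (by simp; omega)
      have h5 := Submodule.finrank_map_le
        (LinearMap.mulLeft K (∑ i, c i • ((Module.finBasis K ↥(𝒜 1)) i : A))) (𝒜 i)
      have h6 := Submodule.finrank_mono (aux_map_le 𝒜 _ (hmem c) i)
      split_ifs at h4 <;> omega
end

section
/- Perazzo polynomials have vanishing Hessian: if n > m and f = x_1g_1 + … + x_ng_n ∈ K[x_1,…,x_n,u_1,…,u_m] is a Perazzo polynomial of bidegree (1,d−1), i.e. the g_i ∈ K[u_1,…,u_m]_{d−1} are linearly independent over K, then hess_f = 0, i.e. the determinant of the (n+m)×(n+m) Hessian matrix of second partial derivatives of f is the zero polynomial. -/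
open MvPolynomial

namespace Paper

variable {K : Type*} [Field K]

/-- The Hessian matrix of second partial derivatives of a polynomial. -/
noncomputable def hessian {σ : Type*} (f : MvPolynomial σ K) :
    Matrix σ σ (MvPolynomial σ K) :=
  Matrix.of fun i j => pderiv i (pderiv j f)

/-- The determinant of the Hessian matrix (`hess_f`). -/
noncomputable def hessianDet {σ : Type*} [Fintype σ] [DecidableEq σ]
    (f : MvPolynomial σ K) : MvPolynomial σ K :=
  (hessian f).det

/-- The rank of the Hessian matrix over the rational function field `K(x)`. -/
noncomputable def hessianRank {σ : Type*} [Fintype σ] (f : MvPolynomial σ K) : ℕ :=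
  ((hessian f).map (algebraMap (MvPolynomial σ K) (FractionRing (MvPolynomial σ K)))).rank

end Paper

open MvPolynomial in
theorem pderiv_inl_rename_inr {K : Type*} [Field K] {n m : ℕ} (i : Fin n)
    (p : MvPolynomial (Fin m) K) :
    pderiv (Sum.inl i : Fin n ⊕ Fin m) (rename Sum.inr p) = 0 := by
  induction p using MvPolynomial.induction_on with
  | C a => simp
  | add p q hp hq => simp [hp, hq]
  | mul_X p j hp => simp [hp, pderiv_X]

open Paper MvPolynomial in
/-- Perazzo polynomials have vanishing Hessian. -/
theorem perazzo_hessian_vanishes {K : Type*} [Field K] [CharZero K]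
    {n m d : ℕ} (hnm : m < n)
    (g : Fin n → MvPolynomial (Fin m) K)
    (hg : ∀ i, (g i).IsHomogeneous (d - 1))
    (hli : LinearIndependent K g) :
    hessianDet
      (∑ i, X (Sum.inl i) * rename Sum.inr (g i) : MvPolynomial (Fin n ⊕ Fin m) K) = 0 := by
  classical
  set f : MvPolynomial (Fin n ⊕ Fin m) K := ∑ i, X (Sum.inl i) * rename Sum.inr (g i) with hf
  have h1 : ∀ j, pderiv (Sum.inl j) f = rename Sum.inr (g j) := by
    intro j
    rw [hf, map_sum, Finset.sum_eq_single j]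
    · simp [pderiv_inl_rename_inr]
    · intro b _ hb
      simp [pderiv_inl_rename_inr, pderiv_X, Pi.single_apply, hb]
    · simp
  let B : Matrix (Fin m) (Fin n) (MvPolynomial (Fin n ⊕ Fin m) K) :=
    Matrix.of fun i j => hessian f (Sum.inr i) (Sum.inl j)
  have hB : ¬ Function.Injective B.mulVecLin := fun h =>
    absurd (le_of_fin_injective _ B.mulVecLin h) (by omega)
  rw [injective_iff_map_eq_zero] at hB
  push Not at hB
  obtain ⟨v, hv, hv0⟩ := hB
  unfold hessianDet
  rw [← Matrix.exists_mulVec_eq_zero_iff]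
  refine ⟨Sum.elim v 0, ?_, ?_⟩
  · intro h
    apply hv0
    funext i
    exact congrFun h (Sum.inl i)
  · funext i
    rcases i with i | i
    · simp [Matrix.mulVec, dotProduct, hessian, h1, pderiv_inl_rename_inr]
    · have := congrFun hv i
      simpa [Matrix.mulVec, dotProduct, B] using this
end

section
/- Let f = Σ_{i=1}^n x_i g_i and f' = Σ_{i=1}^r x'_i g'_i be bihomogeneous polynomials of the same bidegree (1,d−1) in disjoint sets of variables. Then rk Hess_{f ⊔ f'} = rk Hess_f + rk Hess_{f'}. If moreover g_n = u_m^{d−1} and g'_1 = (u'_1)^{d−1}, so that the concatenation f # f' is defined, then rk Hess_{f # f'} = rk Hess_f + rk Hess_{f'} − 2. -/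
open MvPolynomial

theorem aux_diag {F n : Type*} [Field F] [Fintype n] [DecidableEq n] (A : Matrix n n F) :
    ∃ (V U : Matrix n n F) (w : n → F), IsUnit V.det ∧ IsUnit U.det ∧ V * A * U = Matrix.diagonal w := by
  obtain ⟨L, L', D, h⟩ := Matrix.Pivot.exists_list_transvec_mul_mul_list_transvec_eq_diagonal A
  refine ⟨_, _, D, ?_, ?_, h⟩ <;> simp [Matrix.TransvectionStruct.det_toMatrix_prod]

theorem aux_rank_mul {F n : Type*} [Field F] [Fintype n] [DecidableEq n] (V A U : Matrix n n F)
    (hV : IsUnit V.det) (hU : IsUnit U.det) : (V * A * U).rank = A.rank := by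
  rw [Matrix.rank_mul_eq_left_of_isUnit_det _ _ hU, Matrix.rank_mul_eq_right_of_isUnit_det _ _ hV]

theorem aux_rank_map {F E n : Type*} [Field F] [Field E] [Fintype n] (φ : F →+* E)
    (A : Matrix n n F) : (A.map φ).rank = A.rank := by
  classical
  obtain ⟨V, U, w, hV, hU, h⟩ := aux_diag A
  rw [← aux_rank_mul V A U hV hU, ← aux_rank_mul (V.map φ) (A.map φ) (U.map φ), ← Matrix.map_mul,
    ← Matrix.map_mul, h, Matrix.diagonal_map (map_zero φ), Matrix.rank_diagonal, Matrix.rank_diagonal]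
  · simp
  · have := hV.map φ
    rwa [RingHom.map_det] at this
  · have := hU.map φ
    rwa [RingHom.map_det] at this

theorem aux_rank_blocks {F n m : Type*} [Field F] [Fintype n] [Fintype m]
    (A : Matrix n n F) (D : Matrix m m F) :
    (Matrix.fromBlocks A 0 0 D).rank = A.rank + D.rank := by
  classical
  obtain ⟨V, U, w, hV, hU, h⟩ := aux_diag A
  obtain ⟨V', U', w', hV', hU', h'⟩ := aux_diag D
  rw [← aux_rank_mul V A U hV hU, ← aux_rank_mul V' D U' hV' hU',
    ← aux_rank_mul (Matrix.fromBlocks V 0 0 V') _ (Matrix.fromBlocks U 0 0 U')]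
  · simp only [Matrix.fromBlocks_multiply, Matrix.mul_zero, Matrix.zero_mul, add_zero, zero_add,
      h, h', Matrix.fromBlocks_diagonal, Matrix.rank_diagonal]
    rw [← Fintype.card_sum]
    exact Fintype.card_congr (Equiv.subtypeSum)
  · simpa using And.intro hV.ne_zero hV'.ne_zero
  · simpa using And.intro hU.ne_zero hU'.ne_zero

/-- rank over the fraction field -/
noncomputable def frk {R n : Type*} [CommRing R] [Fintype n] (A : Matrix n n R) : ℕ :=
  (A.map (algebraMap R (FractionRing R))).rank

theorem frk_map {R S n : Type*} [CommRing R] [CommRing S] [IsDomain R] [IsDomain S] [Fintype n]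
    (φ : R →+* S) (hφ : Function.Injective φ) (A : Matrix n n R) : frk (A.map φ) = frk A := by
  unfold frk
  rw [← aux_rank_map (IsFractionRing.map (K := FractionRing R) (L := FractionRing S) hφ)]
  congr 1
  ext i j
  simp [IsFractionRing.map]

theorem frk_blocks {R n m : Type*} [CommRing R] [IsDomain R] [Fintype n] [Fintype m]
    (A : Matrix n n R) (D : Matrix m m R) :
    frk (Matrix.fromBlocks A 0 0 D) = frk A + frk D := by
  unfold frk
  rw [← aux_rank_blocks, Matrix.fromBlocks_map]
  congr 2 <;> ext <;> simp

theorem aux_pivot {F τ : Type*} [Field F] [Fintype τ] 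
    (a b : F) (ha : a ≠ 0) (v : τ → F) (D : Matrix τ τ F) :
    (Matrix.fromBlocks !![0, a; a, b] (Matrix.of ![0, v]) (Matrix.of ![0, v]).transpose D).rank
      = 2 + D.rank := by
  classical
  let P : Matrix (Fin 2) (Fin 2) F := !![0, a; a, b]
  let Q : Matrix (Fin 2) (Fin 2) F := !![-b/a^2, 1/a; 1/a, 0]
  have hPQ : P * Q = 1 := by
    ext i j; fin_cases i <;> fin_cases j <;> simp [P, Q, Matrix.mul_apply, Fin.sum_univ_two] <;> field_simp <;> ring
  let _ : Invertible P := ⟨Q, mul_eq_one_comm.mp hPQ, hPQ⟩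
  have hQ : ⅟P = Q := rfl
  change (Matrix.fromBlocks P _ _ D).rank = _
  rw [Matrix.fromBlocks_eq_of_invertible₁₁, aux_rank_mul, aux_rank_blocks, hQ]
  · congr 1
    · rw [Matrix.rank_of_isUnit _ (isUnit_of_invertible P)]; simp
    · congr 1
      ext i j
      simp [Q, Matrix.mul_apply, Fin.sum_univ_two]
  · simp
  · simp

theorem frk_pivot {R σ τ : Type*} [CommRing R] [IsDomain R] [Fintype σ] [Fintype τ] 
    (A : Matrix σ σ R) (hA : ∀ i j, A i j = A j i) (p q : σ) (t : τ → σ) 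
    (hpq : p ≠ q) (ht : Function.Injective t) (hp : ∀ k, t k ≠ p) (hq : ∀ k, t k ≠ q)
    (hs : ∀ i, i = p ∨ i = q ∨ ∃ k, t k = i)
    (hpp : A p p = 0) (hpk : ∀ k, A p (t k) = 0) (hne : A p q ≠ 0) :
    frk A = 2 + frk (A.submatrix t t) := by
  unfold frk
  have hb : Function.Bijective (Sum.elim ![p, q] t) := by
    constructor
    · rintro (i | i) (j | j) h
      · fin_cases i <;> fin_cases j <;> simp_all [eq_comm]
      · fin_cases i <;> simp_all [eq_comm]
      · fin_cases j <;> simp_all [eq_comm]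
      · simp_all [ht.eq_iff]
    · intro i
      rcases hs i with rfl | rfl | ⟨k, rfl⟩
      · exact ⟨Sum.inl 0, rfl⟩
      · exact ⟨Sum.inl 1, rfl⟩
      · exact ⟨Sum.inr k, rfl⟩
  let e := Equiv.ofBijective _ hb
  have he0 : e (Sum.inl 0) = p := rfl
  have he1 : e (Sum.inl 1) = q := rfl
  have hek : ∀ k, e (Sum.inr k) = t k := fun _ => rfl
  rw [← Matrix.rank_submatrix _ e e]
  set ι := algebraMap R (FractionRing R)
  rw [← aux_pivot (ι (A p q)) (ι (A q q)) (by simpa [ι] using hne) (fun k => ι (A q (t k)))]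
  congr 1
  ext (i | i) (j | j)
  · fin_cases i <;> fin_cases j <;> simp [he0, he1, hpp, hA q p]
  · fin_cases i <;> simp [he0, he1, hek, hpk]
  · fin_cases j <;> simp [he0, he1, hek, hpk, hA (t i)]
  · simp [hek]

open Paper

theorem aux_pderiv_comm {K σ : Type*} [Field K] (i j : σ) (f : MvPolynomial σ K) :
    pderiv i (pderiv j f) = pderiv j (pderiv i f) := by
  classical
  have h : ⁅(pderiv i : Derivation K (MvPolynomial σ K) (MvPolynomial σ K)),
      (pderiv j : Derivation K (MvPolynomial σ K) (MvPolynomial σ K))⁆ = 0 := by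
    apply MvPolynomial.derivation_ext
    intro k
    rw [Derivation.commutator_apply]
    simp only [pderiv_X, Pi.single_apply]
    split_ifs <;> simp
  have h2 := congrArg (fun D => D f) h
  simp only [Derivation.commutator_apply] at h2
  simpa [sub_eq_zero] using h2

theorem aux_pderiv_rename_zero {K σ τ : Type*} [Field K] (φ : σ → τ) (i : τ) (h : ∀ k, φ k ≠ i)
    (f : MvPolynomial σ K) : pderiv i (rename φ f) = 0 := by
  classical
  apply pderiv_eq_zero_of_notMem_vars
  intro hi
  have := vars_rename φ f hi
  simp at this
  obtain ⟨k, _, hk⟩ := this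
  exact h k hk

theorem hessianRank_eq_frk {K σ : Type*} [Field K] [Fintype σ] (f : MvPolynomial σ K) :
    hessianRank f = frk (hessian f) := rfl

theorem aux_hess_pivot {K σ τ : Type*} [Field K] [CharZero K] [Fintype σ] [Fintype τ]
    (f : MvPolynomial σ K) (p q : σ) (t : τ → σ) (e : ℕ) (he : e ≠ 0)
    (hpq : p ≠ q) (ht : Function.Injective t) (hp : ∀ k, t k ≠ p) (hq : ∀ k, t k ≠ q)
    (hs : ∀ i, i = p ∨ i = q ∨ ∃ k, t k = i) (hf : pderiv p f = X q ^ e) :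
    hessianRank f = 2 + frk ((hessian f).submatrix t t) := by
  have h1 : ∀ j, hessian f p j = pderiv j (X q ^ e) := by
    intro j
    simp only [hessian, Matrix.of_apply]
    rw [aux_pderiv_comm, hf]
  rw [hessianRank_eq_frk]
  apply frk_pivot _ _ p q t hpq ht hp hq hs
  · rw [h1, pderiv_pow, pderiv_X_of_ne hpq.symm, mul_zero]
  · intro k
    rw [h1, pderiv_pow, pderiv_X_of_ne (hq k).symm, mul_zero]
  · rw [h1, pderiv_pow, pderiv_X_self, mul_one]
    exact mul_ne_zero (by exact_mod_cast he) (pow_ne_zero _ (X_ne_zero q))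
  · intro i j
    exact aux_pderiv_comm _ _ _

theorem aux_concat {K σ σ₁ σ₂ τ₁ τ₂ : Type*} [Field K] [CharZero K] [Fintype σ]
    [Fintype σ₁] [Fintype σ₂] [Fintype τ₁] [Fintype τ₂]
    (f : MvPolynomial σ₁ K) (f' : MvPolynomial σ₂ K) (φ : σ₁ → σ) (ψ : σ₂ → σ)
    (hφ : Function.Injective φ) (hψ : Function.Injective ψ)
    (p₁ q₁ : σ₁) (p₂ q₂ : σ₂) (p q : σ) (t₁ : τ₁ → σ₁) (t₂ : τ₂ → σ₂) (e : ℕ) (he : e ≠ 0)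
    (hp₁ : φ p₁ = p) (hp₂ : ψ p₂ = p) (hq₁ : φ q₁ = q) (hq₂ : ψ q₂ = q) (hpq : p ≠ q)
    (ht₁ : Function.Injective t₁) (ht₂ : Function.Injective t₂)
    (htp₁ : ∀ k, t₁ k ≠ p₁) (htq₁ : ∀ k, t₁ k ≠ q₁)
    (htp₂ : ∀ k, t₂ k ≠ p₂) (htq₂ : ∀ k, t₂ k ≠ q₂)
    (hs₁ : ∀ i, i = p₁ ∨ i = q₁ ∨ ∃ k, t₁ k = i)
    (hs₂ : ∀ i, i = p₂ ∨ i = q₂ ∨ ∃ k, t₂ k = i)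
    (hs : ∀ i, (∃ j, φ j = i) ∨ ∃ j, ψ j = i)
    (hd : ∀ k l, φ (t₁ k) ≠ ψ (t₂ l))
    (hf : pderiv p₁ f = X q₁ ^ e) (hf' : pderiv p₂ f' = X q₂ ^ e) :
    hessianRank (rename φ f + rename ψ f' - X p * X q ^ e) =
      hessianRank f + hessianRank f' - 2 := by
  have hd₁ : ∀ k j, ψ j ≠ φ (t₁ k) := by
    intro k j
    rcases hs₂ j with rfl | rfl | ⟨l, rfl⟩
    · rw [hp₂, ← hp₁]; exact fun h => htp₁ k (hφ h.symm)
    · rw [hq₂, ← hq₁]; exact fun h => htq₁ k (hφ h.symm)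
    · exact (hd k l).symm
  have hd₂ : ∀ k j, φ j ≠ ψ (t₂ k) := by
    intro k j
    rcases hs₁ j with rfl | rfl | ⟨l, rfl⟩
    · rw [hp₁, ← hp₂]; exact fun h => htp₂ k (hψ h.symm)
    · rw [hq₁, ← hq₂]; exact fun h => htq₂ k (hψ h.symm)
    · exact hd l k
  set G := rename φ f + rename ψ f' - X p * X q ^ e with hG
  have hXX : ∀ i, i ≠ p → i ≠ q → pderiv i (X p * X q ^ e : MvPolynomial σ K) = 0 := by
    intro i h1 h2
    rw [pderiv_mul, pderiv_pow, pderiv_X_of_ne h1.symm, pderiv_X_of_ne h2.symm]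
    simp
  have D₁ : ∀ k, pderiv (φ (t₁ k)) G = rename φ (pderiv (t₁ k) f) := by
    intro k
    rw [hG, map_sub, map_add, pderiv_rename hφ, aux_pderiv_rename_zero ψ _ (hd₁ k), hXX]
    · simp
    · rw [← hp₁]; exact fun h => htp₁ k (hφ h)
    · rw [← hq₁]; exact fun h => htq₁ k (hφ h)
  have D₂ : ∀ k, pderiv (ψ (t₂ k)) G = rename ψ (pderiv (t₂ k) f') := by
    intro k
    rw [hG, map_sub, map_add, pderiv_rename hψ, aux_pderiv_rename_zero φ _ (hd₂ k), hXX]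
    · simp
    · rw [← hp₂]; exact fun h => htp₂ k (hψ h)
    · rw [← hq₂]; exact fun h => htq₂ k (hψ h)
  have Dp : pderiv p G = X q ^ e := by
    have h1 : pderiv p (rename φ f) = X q ^ e := by
      rw [← hp₁, pderiv_rename hφ, hf]; simp [hq₁]
    have h2 : pderiv p (rename ψ f') = X q ^ e := by
      rw [← hp₂, pderiv_rename hψ, hf']; simp [hq₂]
    rw [hG, map_sub, map_add, h1, h2, pderiv_mul, pderiv_pow, pderiv_X_self,
      pderiv_X_of_ne hpq.symm]
    simp
  rw [aux_hess_pivot f p₁ q₁ t₁ e he (by rintro rfl; exact hpq (hp₁.symm.trans hq₁)) ht₁ htp₁ htq₁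
      hs₁ hf,
    aux_hess_pivot f' p₂ q₂ t₂ e he (by rintro rfl; exact hpq (hp₂.symm.trans hq₂)) ht₂ htp₂ htq₂
      hs₂ hf',
    aux_hess_pivot G p q (Sum.elim (φ ∘ t₁) (ψ ∘ t₂)) e he hpq ?_ ?_ ?_ ?_ Dp]
  · have : (hessian G).submatrix (Sum.elim (φ ∘ t₁) (ψ ∘ t₂)) (Sum.elim (φ ∘ t₁) (ψ ∘ t₂)) =
        Matrix.fromBlocks
          (((hessian f).submatrix t₁ t₁).map (rename φ : MvPolynomial σ₁ K →ₐ[K] _).toRingHom) 0 0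
          (((hessian f').submatrix t₂ t₂).map
            (rename ψ : MvPolynomial σ₂ K →ₐ[K] _).toRingHom) := by
      ext1 (i | i) (j | j)
      · simp [hessian, D₁, pderiv_rename hφ]
      · simp [hessian, D₂, aux_pderiv_rename_zero ψ _ (hd₁ i)]
      · simp [hessian, D₁, aux_pderiv_rename_zero φ _ (hd₂ i)]
      · simp [hessian, D₂, pderiv_rename hψ]
    rw [this, frk_blocks, frk_map _ (rename_injective φ hφ), frk_map _ (rename_injective ψ hψ)]
    omega
  · rintro (i | i) (j | j) h
    · simpa [hφ.eq_iff, ht₁.eq_iff] using h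
    · exact absurd h (hd i j)
    · exact absurd h.symm (hd j i)
    · simpa [hψ.eq_iff, ht₂.eq_iff] using h
  · rintro (k | k)
    · rw [← hp₁]; exact fun h => htp₁ k (hφ h)
    · rw [← hp₂]; exact fun h => htp₂ k (hψ h)
  · rintro (k | k)
    · rw [← hq₁]; exact fun h => htq₁ k (hφ h)
    · rw [← hq₂]; exact fun h => htq₂ k (hψ h)
  · intro i
    rcases hs i with ⟨j, rfl⟩ | ⟨j, rfl⟩
    · rcases hs₁ j with rfl | rfl | ⟨k, rfl⟩
      · exact Or.inl hp₁
      · exact Or.inr (Or.inl hq₁)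
      · exact Or.inr (Or.inr ⟨Sum.inl k, rfl⟩)
    · rcases hs₂ j with rfl | rfl | ⟨k, rfl⟩
      · exact Or.inl hp₂
      · exact Or.inr (Or.inl hq₂)
      · exact Or.inr (Or.inr ⟨Sum.inr k, rfl⟩)

theorem aux_juxt {K σ σ₁ σ₂ : Type*} [Field K] [Fintype σ] [Fintype σ₁] [Fintype σ₂]
    (f : MvPolynomial σ₁ K) (f' : MvPolynomial σ₂ K) (φ : σ₁ → σ) (ψ : σ₂ → σ)
    (ε : σ₁ ⊕ σ₂ ≃ σ) (h₁ : ∀ i, ε (Sum.inl i) = φ i) (h₂ : ∀ i, ε (Sum.inr i) = ψ i) :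
    hessianRank (rename φ f + rename ψ f') = hessianRank f + hessianRank f' := by
  have hφ : Function.Injective φ := fun a b h => by
    rw [← h₁, ← h₁] at h; simpa using h
  have hψ : Function.Injective ψ := fun a b h => by
    rw [← h₂, ← h₂] at h; simpa using h
  have hd : ∀ i j, φ i ≠ ψ j := fun i j h => by
    rw [← h₁, ← h₂] at h; simp at h
  have : (hessian (rename φ f + rename ψ f')).submatrix ε ε =
        Matrix.fromBlocks
          ((hessian f).map (rename φ : MvPolynomial σ₁ K →ₐ[K] _).toRingHom) 0 0
          ((hessian f').map (rename ψ : MvPolynomial σ₂ K →ₐ[K] _).toRingHom) := by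
    have e1 : ∀ i g, pderiv (φ i) (rename ψ (g : MvPolynomial σ₂ K)) = 0 :=
      fun i g => aux_pderiv_rename_zero ψ _ (fun k => (hd i k).symm) g
    have e2 : ∀ i g, pderiv (ψ i) (rename φ (g : MvPolynomial σ₁ K)) = 0 :=
      fun i g => aux_pderiv_rename_zero φ _ (fun k => hd k i) g
    ext1 (i | i) (j | j) <;> simp [hessian, h₁, h₂, e1, e2, pderiv_rename hφ, pderiv_rename hψ]
  rw [hessianRank_eq_frk, hessianRank_eq_frk, hessianRank_eq_frk,
    ← frk_map (rename φ : MvPolynomial σ₁ K →ₐ[K] _).toRingHom (rename_injective φ hφ),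
    ← frk_map (rename ψ : MvPolynomial σ₂ K →ₐ[K] _).toRingHom (rename_injective ψ hψ)]
  refine Eq.trans ?_ (frk_blocks _ _)
  refine Eq.trans ?_ (congrArg frk this)
  unfold frk
  rw [← Matrix.submatrix_map, Matrix.rank_submatrix]

theorem aux_pderiv_inl {K : Type*} [Field K] {a b : Type*} [Fintype a]
    (g : a → MvPolynomial b K) (k : a) :
    pderiv (Sum.inl k) (∑ i, X (Sum.inl i) * rename Sum.inr (g i) : MvPolynomial (a ⊕ b) K) =
      rename Sum.inr (g k) := by
  classical
  rw [map_sum, Finset.sum_eq_single k]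
  · rw [pderiv_mul, pderiv_X_self, aux_pderiv_rename_zero _ _ (by simp)]; simp
  · intro i _ h
    rw [pderiv_mul, pderiv_X_of_ne (by simpa using h), aux_pderiv_rename_zero _ _ (by simp)]; simp
  · simp

/-- All first partial derivatives are constants. -/
def IsLin {K σ : Type*} [Field K] (f : MvPolynomial σ K) : Prop :=
  ∀ j, ∃ c : K, pderiv j f = C c

theorem IsLin.add {K σ : Type*} [Field K] {f g : MvPolynomial σ K} (hf : IsLin f) (hg : IsLin g) :
    IsLin (f + g) := by
  intro j
  obtain ⟨a, ha⟩ := hf j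
  obtain ⟨b, hb⟩ := hg j
  exact ⟨a + b, by simp [ha, hb]⟩

theorem IsLin.sub {K σ : Type*} [Field K] {f g : MvPolynomial σ K} (hf : IsLin f) (hg : IsLin g) :
    IsLin (f - g) := by
  intro j
  obtain ⟨a, ha⟩ := hf j
  obtain ⟨b, hb⟩ := hg j
  exact ⟨a - b, by simp [ha, hb]⟩

theorem isLin_X {K σ : Type*} [Field K] (i : σ) : IsLin (X i : MvPolynomial σ K) := by
  classical
  intro j
  by_cases h : i = j
  · subst h; exact ⟨1, by simp⟩
  · exact ⟨0, by simp [pderiv_X_of_ne h]⟩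

theorem isLin_sum {K σ a : Type*} [Field K] [Fintype a] (v : a → σ) (c : a → K) :
    IsLin (∑ i, X (v i) * C (c i) : MvPolynomial σ K) := by
  intro j
  choose b hb using fun i => isLin_X (K := K) (v i) j
  refine ⟨∑ i, b i * c i, ?_⟩
  simp [hb, mul_comm]

theorem IsLin.hessianRank {K σ : Type*} [Field K] [Fintype σ]
    {f : MvPolynomial σ K} (h : IsLin f) : Paper.hessianRank f = 0 := by
  have : hessian f = 0 := by
    ext1 i j
    obtain ⟨c, hc⟩ := h j
    simp [hessian, hc]
  rw [Paper.hessianRank, this]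
  simp

theorem aux_const {K b : Type*} [Field K] {g : MvPolynomial b K} (h : g.IsHomogeneous 0) :
    ∃ c, g = C c :=
  ⟨_, totalDegree_eq_zero_iff_eq_C.mp (Nat.le_zero.mp h.totalDegree_le)⟩

open Paper MvPolynomial in
/-- ranks of Hessians of juxtapositions and concatenations of
bihomogeneous polynomials of bidegree `(1, d-1)`. -/
theorem hessianRank_juxtaposition_concatenation {K : Type*} [Field K] [CharZero K]
    {n m r s : ℕ} (d : ℕ)
    (g : Fin (n + 1) → MvPolynomial (Fin (m + 1)) K)
    (g' : Fin (r + 1) → MvPolynomial (Fin (s + 1)) K)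
    (hg : ∀ i, (g i).IsHomogeneous (d - 1))
    (hg' : ∀ i, (g' i).IsHomogeneous (d - 1)) :
    -- juxtaposition `f ⊔ f' = f + f'` in disjoint sets of variables
    (hessianRank
        (rename (Sum.map Sum.inl Sum.inl)
            (∑ i, X (Sum.inl i) * rename Sum.inr (g i)) +
          rename (Sum.map Sum.inr Sum.inr)
            (∑ i, X (Sum.inl i) * rename Sum.inr (g' i)) :
          MvPolynomial ((Fin (n + 1) ⊕ Fin (r + 1)) ⊕ (Fin (m + 1) ⊕ Fin (s + 1))) K) =
      hessianRank (∑ i, X (Sum.inl i) * rename Sum.inr (g i) :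
          MvPolynomial (Fin (n + 1) ⊕ Fin (m + 1)) K) +
        hessianRank (∑ i, X (Sum.inl i) * rename Sum.inr (g' i) :
          MvPolynomial (Fin (r + 1) ⊕ Fin (s + 1)) K)) ∧
    -- concatenation `f # f' = f + f' - x_n u_m^{d-1}`, identifying `x'_1 = x_n`, `u'_1 = u_m`
    (g (Fin.last n) = X (Fin.last m) ^ (d - 1) →
      g' 0 = X 0 ^ (d - 1) →
      hessianRank
          (rename (Sum.map Sum.inl Sum.inl)
              (∑ i, X (Sum.inl i) * rename Sum.inr (g i)) +
            rename (Sum.map (Fin.cases (Sum.inl (Fin.last n)) Sum.inr)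
                (Fin.cases (Sum.inl (Fin.last m)) Sum.inr))
              (∑ i, X (Sum.inl i) * rename Sum.inr (g' i)) -
            X (Sum.inl (Sum.inl (Fin.last n))) *
              X (Sum.inr (Sum.inl (Fin.last m))) ^ (d - 1) :
            MvPolynomial ((Fin (n + 1) ⊕ Fin r) ⊕ (Fin (m + 1) ⊕ Fin s)) K) =
        hessianRank (∑ i, X (Sum.inl i) * rename Sum.inr (g i) :
            MvPolynomial (Fin (n + 1) ⊕ Fin (m + 1)) K) +
          hessianRank (∑ i, X (Sum.inl i) * rename Sum.inr (g' i) :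
            MvPolynomial (Fin (r + 1) ⊕ Fin (s + 1)) K) - 2) := by
  refine ⟨?_, ?_⟩
  · apply aux_juxt _ _ _ _ (Equiv.sumSumSumComm _ _ _ _)
    · rintro (i | i) <;> rfl
    · rintro (i | i) <;> rfl
  intro hgn hg0
  by_cases he : d - 1 = 0
  · rw [he] at hg hg' ⊢
    choose c hc using fun i => aux_const (hg i)
    choose c' hc' using fun i => aux_const (hg' i)
    have h1 : hessianRank (∑ i, X (Sum.inl i) * rename Sum.inr (g i) :
        MvPolynomial (Fin (n + 1) ⊕ Fin (m + 1)) K) = 0 := by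
      simp only [hc, rename_C]
      exact (isLin_sum _ _).hessianRank
    have h2 : hessianRank (∑ i, X (Sum.inl i) * rename Sum.inr (g' i) :
        MvPolynomial (Fin (r + 1) ⊕ Fin (s + 1)) K) = 0 := by
      simp only [hc', rename_C]
      exact (isLin_sum _ _).hessianRank
    rw [h1, h2]
    apply IsLin.hessianRank
    simp only [hc, hc', rename_C, map_sum, map_mul, rename_X, pow_zero, mul_one]
    exact ((isLin_sum _ _).add (isLin_sum _ _)).sub (isLin_X _)
  · have key : ∀ (a b : ℕ), Function.Injective
        (Fin.cases (Sum.inl (Fin.last a)) Sum.inr : Fin (b + 1) → Fin (a + 1) ⊕ Fin b) := by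
      intro a b i j
      refine Fin.cases ?_ (fun i => ?_) i <;> refine Fin.cases ?_ (fun j => ?_) j <;> simp
    refine aux_concat _ _ _ _ (Sum.map_injective.mpr ⟨Sum.inl_injective, Sum.inl_injective⟩)
      (Sum.map_injective.mpr ⟨key n r, key m s⟩)
      (Sum.inl (Fin.last n)) (Sum.inr (Fin.last m)) (Sum.inl 0) (Sum.inr 0) _ _
      (Sum.map Fin.castSucc Fin.castSucc : Fin n ⊕ Fin m → _)
      (Sum.map Fin.succ Fin.succ : Fin r ⊕ Fin s → _) (d - 1) he
      rfl rfl rfl rfl (by simp)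
      (Sum.map_injective.mpr ⟨Fin.castSucc_injective _, Fin.castSucc_injective _⟩)
      (Sum.map_injective.mpr ⟨Fin.succ_injective _, Fin.succ_injective _⟩)
      ?_ ?_ ?_ ?_ ?_ ?_ ?_ ?_ ?_ ?_
    · rintro (k | k) <;> simp [Fin.castSucc_ne_last]
    · rintro (k | k) <;> simp [Fin.castSucc_ne_last]
    · rintro (k | k) <;> simp
    · rintro (k | k) <;> simp
    · rintro (i | i)
      · refine Fin.lastCases (by simp) (fun k => ?_) i
        exact Or.inr (Or.inr ⟨Sum.inl k, rfl⟩)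
      · refine Fin.lastCases (by simp) (fun k => ?_) i
        exact Or.inr (Or.inr ⟨Sum.inr k, rfl⟩)
    · rintro (i | i)
      · refine Fin.cases (by simp) (fun k => ?_) i
        exact Or.inr (Or.inr ⟨Sum.inl k, rfl⟩)
      · refine Fin.cases (by simp) (fun k => ?_) i
        exact Or.inr (Or.inr ⟨Sum.inr k, rfl⟩)
    · rintro ((i | i) | (i | i))
      · exact Or.inl ⟨Sum.inl i, rfl⟩
      · exact Or.inr ⟨Sum.inl i.succ, rfl⟩
      · exact Or.inl ⟨Sum.inr i, rfl⟩
      · exact Or.inr ⟨Sum.inr i.succ, rfl⟩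
    · rintro (k | k) (l | l) <;> simp
    · rw [aux_pderiv_inl, hgn]; simp
    · rw [aux_pderiv_inl, hg0]; simp
end

section
/- For every integer k ≥ 1, the polynomial f = xu^{2k} + yu^kv^k + zv^{2k} ∈ K[x,y,z,u,v], homogeneous of degree d = 2k+1, satisfies hess_f = 0 and rk Hess_f = 4; and for every integer k ≥ 2, the polynomial f = xu^{2k−1} + yuv^{2k−2} + zu^kv^{k−1} ∈ K[x,y,z,u,v], homogeneous of degree d = 2k, satisfies hess_f = 0 and rk Hess_f = 4. In both cases the five first partial derivatives of f are linearly independent over K (so V(f) ⊂ P^4 is not a cone). -/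
open MvPolynomial

theorem aux_det5 {R : Type*} [CommRing R] (a b c d e f a' b' c' d' e' f' p q r s : R) :
    (!![0,0,0,a,b; 0,0,0,c,d; 0,0,0,e,f; a',b',c',p,q; d',e',f',r,s] : Matrix _ _ R).det = 0 := by
  simp [Matrix.det_succ_row_zero, Fin.sum_univ_succ, Fin.succAbove]
  try ring

theorem aux_det4 {R : Type*} [CommRing R] (a b c p q r s : R) :
    (!![0,0,a,0; 0,0,b,c; a,b,p,q; 0,c,r,s] : Matrix _ _ R).det = (a * c) ^ 2 := by
  simp [Matrix.det_succ_row_zero, Fin.sum_univ_succ, Fin.succAbove]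
  try ring

open Paper MvPolynomial in
theorem aux_main {K : Type*} [Field K] [CharZero K] (f a b c : MvPolynomial (Fin 5) K)
    (hf : f = X 0 * a + X 1 * b + X 2 * c)
    (ha0 : pderiv 0 a = 0) (ha1 : pderiv 1 a = 0) (ha2 : pderiv 2 a = 0)
    (hb0 : pderiv 0 b = 0) (hb1 : pderiv 1 b = 0) (hb2 : pderiv 2 b = 0)
    (hc0 : pderiv 0 c = 0) (hc1 : pderiv 1 c = 0) (hc2 : pderiv 2 c = 0)
    (ha4 : pderiv 4 a = 0) (ha3 : pderiv 3 a ≠ 0) (hb4 : pderiv 4 b ≠ 0)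
    (hind : ∀ r s t : K, C r * a + C s * b + C t * c = 0 → r = 0 ∧ s = 0 ∧ t = 0) :
    hessianDet f = 0 ∧ hessianRank f = 4 ∧
      LinearIndependent K (fun i : Fin 5 => pderiv i f) := by
  have p0 : pderiv 0 f = a := by
    subst hf; simp [pderiv_X, ha0, hb0, hc0]
  have p1 : pderiv 1 f = b := by
    subst hf; simp [pderiv_X, ha1, hb1, hc1]
  have p2 : pderiv 2 f = c := by
    subst hf; simp [pderiv_X, ha2, hb2, hc2]
  have sym : ∀ i j, pderiv i (pderiv j f) = pderiv j (pderiv i f) := by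
    intro i j
    have hz : ⁅pderiv (R := K) i, pderiv j⁆ = (0 : Derivation K (MvPolynomial (Fin 5) K) _) := by
      apply derivation_ext
      intro l
      simp [Derivation.commutator_apply, pderiv_X, Pi.single_apply, apply_ite]
    have := congrArg (fun D : Derivation K (MvPolynomial (Fin 5) K) (MvPolynomial (Fin 5) K) => D f) hz
    simpa [Derivation.commutator_apply, sub_eq_zero] using this
  have s03 : pderiv 0 (pderiv 3 f) = pderiv 3 a := by rw [sym, p0]
  have s04 : pderiv 0 (pderiv 4 f) = 0 := by rw [sym, p0, ha4]
  have s13 : pderiv 1 (pderiv 3 f) = pderiv 3 b := by rw [sym, p1]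
  have s14 : pderiv 1 (pderiv 4 f) = pderiv 4 b := by rw [sym, p1]
  clear hf sym
  have hdet : hessianDet f = 0 := by
    have z : ∀ i j : Fin 3, hessian f (Fin.castLE (by norm_num) i) (Fin.castLE (by norm_num) j) = 0 := by
      intro i j
      fin_cases i <;> fin_cases j <;> simp [hessian, p0, p1, p2, ha0, ha1, ha2, hb0, hb1, hb2, hc0, hc1, hc2]
    have z00 : hessian f 0 0 = 0 := z 0 0
    have z01 : hessian f 0 1 = 0 := z 0 1
    have z02 : hessian f 0 2 = 0 := z 0 2
    have z10 : hessian f 1 0 = 0 := z 1 0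
    have z11 : hessian f 1 1 = 0 := z 1 1
    have z12 : hessian f 1 2 = 0 := z 1 2
    have z20 : hessian f 2 0 = 0 := z 2 0
    have z21 : hessian f 2 1 = 0 := z 2 1
    have z22 : hessian f 2 2 = 0 := z 2 2
    have e : hessian f = !![0,0,0,hessian f 0 3,hessian f 0 4;
      0,0,0,hessian f 1 3,hessian f 1 4;
      0,0,0,hessian f 2 3,hessian f 2 4;
      hessian f 3 0,hessian f 3 1,hessian f 3 2,hessian f 3 3,hessian f 3 4;
      hessian f 4 0,hessian f 4 1,hessian f 4 2,hessian f 4 3,hessian f 4 4] := by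
      ext1 i j
      fin_cases i <;> fin_cases j <;> simp [z00, z01, z02, z10, z11, z12, z20, z21, z22]
    unfold hessianDet
    rw [e]
    exact aux_det5 ..
  refine ⟨hdet, ?_, ?_⟩
  · unfold hessianRank
    set φ := algebraMap (MvPolynomial (Fin 5) K) (FractionRing (MvPolynomial (Fin 5) K)) with hφ
    have hinj : Function.Injective φ := IsFractionRing.injective _ _
    apply le_antisymm
    · by_contra hlt
      have h5 : ((hessian f).map φ).rank = Fintype.card (Fin 5) := by
        have := Matrix.rank_le_card_width ((hessian f).map φ)
        simp at this ⊢
        omega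
      have hu : LinearIndependent _ ((hessian f).map φ).col :=
        linearIndependent_iff_card_eq_finrank_span.mpr (by
          rw [← h5, Matrix.rank_eq_finrank_span_cols]; rfl)
      rw [Matrix.linearIndependent_cols_iff_isUnit, Matrix.isUnit_iff_isUnit_det] at hu
      apply hu.ne_zero
      have : ((hessian f).map φ).det = φ (hessian f).det := by
        rw [RingHom.map_det]; rfl
      rw [this]
      unfold hessianDet at hdet
      rw [hdet, map_zero]
    · let r : Fin 4 → Fin 5 := ![0, 1, 3, 4]
      have hs := Matrix.rank_submatrix_le ((hessian f).map φ) r r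
      refine le_trans ?_ hs
      have hM : (hessian f).submatrix r r = !![0, 0, pderiv 3 a, 0;
          0, 0, pderiv 3 b, pderiv 4 b;
          pderiv 3 a, pderiv 3 b, pderiv 3 (pderiv 3 f), pderiv 3 (pderiv 4 f);
          0, pderiv 4 b, pderiv 4 (pderiv 3 f), pderiv 4 (pderiv 4 f)] := by
        ext1 i j
        fin_cases i <;> fin_cases j <;>
          simp [r, hessian, p0, p1, ha0, ha1, ha4, hb0, hb1, s03, s04, s13, s14]
      have hd : ((hessian f).submatrix r r).det = (pderiv 3 a * pderiv 4 b) ^ 2 := by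
        rw [hM]
        exact aux_det4 ..
      have hne : (((hessian f).map φ).submatrix r r).det ≠ 0 := by
        have : (((hessian f).map φ).submatrix r r).det = φ ((hessian f).submatrix r r).det := by
          rw [RingHom.map_det]; rfl
        rw [this, hd]
        rw [Ne, map_eq_zero_iff φ hinj]
        exact pow_ne_zero _ (mul_ne_zero ha3 hb4)
      have := Matrix.rank_of_isUnit _ ((Matrix.isUnit_iff_isUnit_det _).mpr hne.isUnit)
      rw [this]; simp
  · rw [Fintype.linearIndependent_iff]
    intro g hg
    simp only [Fin.sum_univ_five, p0, p1, p2] at hg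
    have d0 := congrArg (pderiv 0) hg
    have d1 := congrArg (pderiv 1) hg
    simp [s03, s04, s13, s14, ha0, hb0, hc0, ha1, hb1, hc1, smul_eq_C_mul] at d0 d1
    have g3 : g 3 = 0 := by
      simpa [ha3] using d0
    have g4 : g 4 = 0 := by
      simpa [hb4, g3] using d1
    have := hind (g 0) (g 1) (g 2) (by
      simpa [g3, g4, smul_eq_C_mul] using hg)
    intro i
    fin_cases i <;> simp [this, g3, g4]

theorem aux_ind {K : Type*} [Field K] (n : ℕ) (hn : 1 ≤ n) (r s t : K)
    (h : (Polynomial.C r + Polynomial.C s * Polynomial.X ^ n +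
      Polynomial.C t * Polynomial.X ^ (2 * n) : Polynomial K) = 0) : r = 0 ∧ s = 0 ∧ t = 0 := by
  have h0 := congrArg (fun p => Polynomial.coeff p 0) h
  have h1 := congrArg (fun p => Polynomial.coeff p n) h
  have h2 := congrArg (fun p => Polynomial.coeff p (2 * n)) h
  have e1 : n ≠ 0 := by omega
  have e2 : n ≠ 2 * n := by omega
  have e3 : 2 * n ≠ n := by omega
  simp [Polynomial.coeff_X_pow, Polynomial.coeff_C, e1, e1.symm, e2, e3] at h0 h1 h2
  exact ⟨h0, h1, h2⟩

open Paper MvPolynomial in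
/-- for every degree `d ≥ 3` there are explicit forms in 5 variables
(`x = X 0`, `y = X 1`, `z = X 2`, `u = X 3`, `v = X 4`) with vanishing Hessian,
Hessian rank 4, and linearly independent first partial derivatives (not cones). -/
theorem explicit_vanishing_hessian_examples {K : Type*} [Field K] [CharZero K] :
    (∀ k : ℕ, 1 ≤ k →
      (X 0 * X 3 ^ (2 * k) + X 1 * X 3 ^ k * X 4 ^ k + X 2 * X 4 ^ (2 * k) :
          MvPolynomial (Fin 5) K).IsHomogeneous (2 * k + 1) ∧
      hessianDet (X 0 * X 3 ^ (2 * k) + X 1 * X 3 ^ k * X 4 ^ k + X 2 * X 4 ^ (2 * k) :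
          MvPolynomial (Fin 5) K) = 0 ∧
      hessianRank (X 0 * X 3 ^ (2 * k) + X 1 * X 3 ^ k * X 4 ^ k + X 2 * X 4 ^ (2 * k) :
          MvPolynomial (Fin 5) K) = 4 ∧
      LinearIndependent K (fun i : Fin 5 =>
        pderiv i (X 0 * X 3 ^ (2 * k) + X 1 * X 3 ^ k * X 4 ^ k + X 2 * X 4 ^ (2 * k) :
          MvPolynomial (Fin 5) K))) ∧
    (∀ k : ℕ, 2 ≤ k →
      (X 0 * X 3 ^ (2 * k - 1) + X 1 * X 3 * X 4 ^ (2 * k - 2) +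
            X 2 * X 3 ^ k * X 4 ^ (k - 1) :
          MvPolynomial (Fin 5) K).IsHomogeneous (2 * k) ∧
      hessianDet (X 0 * X 3 ^ (2 * k - 1) + X 1 * X 3 * X 4 ^ (2 * k - 2) +
            X 2 * X 3 ^ k * X 4 ^ (k - 1) :
          MvPolynomial (Fin 5) K) = 0 ∧
      hessianRank (X 0 * X 3 ^ (2 * k - 1) + X 1 * X 3 * X 4 ^ (2 * k - 2) +
            X 2 * X 3 ^ k * X 4 ^ (k - 1) :
          MvPolynomial (Fin 5) K) = 4 ∧
      LinearIndependent K (fun i : Fin 5 =>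
        pderiv i (X 0 * X 3 ^ (2 * k - 1) + X 1 * X 3 * X 4 ^ (2 * k - 2) +
              X 2 * X 3 ^ k * X 4 ^ (k - 1) :
          MvPolynomial (Fin 5) K))) := by
  constructor
  · intro k hk
    refine ⟨?_, ?_⟩
    · have X1 := fun i : Fin 5 => isHomogeneous_X K i
      refine ((?_ : IsHomogeneous _ _).add ?_).add ?_
      · convert (X1 0).mul ((X1 3).pow (2 * k)) using 1; ring
      · convert ((X1 1).mul ((X1 3).pow k)).mul ((X1 4).pow k) using 1; ring
      · convert (X1 2).mul ((X1 4).pow (2 * k)) using 1; ring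
    · have k0 : k ≠ 0 := by omega
      have kK : (k : MvPolynomial (Fin 5) K) ≠ 0 := by exact_mod_cast k0
      apply aux_main _ (X 3 ^ (2 * k)) (X 3 ^ k * X 4 ^ k) (X 4 ^ (2 * k)) (by ring)
      any_goals simp [pderiv_pow, pderiv_X, k0, kK]
      intro r s t h
      have h' := congrArg (aeval (![0, 0, 0, 1, Polynomial.X] : Fin 5 → Polynomial K)) h
      simp at h'
      exact aux_ind k hk r s t (by simpa using h')
  · intro k hk
    obtain ⟨n, rfl⟩ : ∃ n, k = n + 1 := ⟨k - 1, by omega⟩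
    have e1 : 2 * (n + 1) - 1 = 2 * n + 1 := by omega
    have e2 : 2 * (n + 1) - 2 = 2 * n := by omega
    have e3 : n + 1 - 1 = n := by omega
    rw [e1, e2, e3]
    refine ⟨?_, ?_⟩
    · have X1 := fun i : Fin 5 => isHomogeneous_X K i
      refine ((?_ : IsHomogeneous _ _).add ?_).add ?_
      · convert (X1 0).mul ((X1 3).pow (2 * n + 1)) using 1; ring
      · convert ((X1 1).mul (X1 3)).mul ((X1 4).pow (2 * n)) using 1; ring
      · convert ((X1 2).mul ((X1 3).pow (n + 1))).mul ((X1 4).pow n) using 1; ring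
    · have k0 : n ≠ 0 := by omega
      have kK : (n : MvPolynomial (Fin 5) K) ≠ 0 := by exact_mod_cast k0
      have kK' : (2 * n + 1 : MvPolynomial (Fin 5) K) ≠ 0 := by
        exact_mod_cast (by omega : 2 * n + 1 ≠ 0)
      apply aux_main _ (X 3 ^ (2 * n + 1)) (X 3 * X 4 ^ (2 * n)) (X 3 ^ (n + 1) * X 4 ^ n) (by ring)
      any_goals simp [pderiv_pow, pderiv_X, k0, kK, kK']
      intro r s t h
      have h' := congrArg (aeval (![0, 0, 0, 1, Polynomial.X] : Fin 5 → Polynomial K)) h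
      simp at h'
      have := aux_ind n (by omega) r t s (by rw [← h']; ring)
      tauto
end
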